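/- arXiv:1504.06731 — 2 statements merged into one kernel-verified Lean document; each statement's English description precedes it below -/
import Mathlib

section
/- For every n ≥ 2, the minimum size of a deterministic U_2-circuit computing the parity function Parity_n equals 3(n-1); that is, size^dc(Parity_n) = 3(n-1). -/
/-!
Proof idea (Schnorr's gate elimination). Every `U₂` gate is, up to complementing its output, a
conjunction of two literals, so setting one of its inputs to the right constant makes it constant.
Consider a minimal circuit on at least two variables for a function that changes whenever one of
its variables does. Its first gate `g` reads two distinct variables `x` and `y`. Another gate `h`
reads `x`, as otherwise the value of `y` that fixes `g` would make the output independent of `x`.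
Set `x` to the constant that fixes `g`: then `g` becomes constant and `h` a literal. Moreover, a
third gate becomes a literal: a reader of `g` other than `h`, or, if there is none, a reader of
`h`, which is now constant too. So each variable but the last costs three gates.
-/

/-- A Boolean circuit with input index type `ι`. It is given as a straight-line
program: each gate has fan-in 2, and each of its two incoming wires comes from
an input node (a variable in `ι` or a Boolean constant) or from an earlier gate.
The output is a designated node (an input node or a gate). -/
structure Circuit (ι : Type) : Type where
  size : ℕ
  gate : Fin size → Bool → Bool → Bool
  in1 : (g : Fin size) → (ι ⊕ Bool) ⊕ Fin g.val
  in2 : (g : Fin size) → (ι ⊕ Bool) ⊕ Fin g.val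
  out : (ι ⊕ Bool) ⊕ Fin size

namespace Circuit

variable {ι : Type}

/-- The value carried by the output of gate `g` on input assignment `x`. -/
def nodeVal (C : Circuit ι) (x : ι → Bool) : (g : Fin C.size) → Bool
  | g =>
    C.gate g
      (match C.in1 g with
       | .inl (.inl i) => x i
       | .inl (.inr b) => b
       | .inr h => C.nodeVal x ⟨h.val, h.isLt.trans g.isLt⟩)
      (match C.in2 g with
       | .inl (.inl i) => x i
       | .inl (.inr b) => b
       | .inr h => C.nodeVal x ⟨h.val, h.isLt.trans g.isLt⟩)
  termination_by g => g.val
  decreasing_by all_goals exact h.isLt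

/-- The output value of the circuit on input assignment `x`. -/
def eval (C : Circuit ι) (x : ι → Bool) : Bool :=
  match C.out with
  | .inl (.inl i) => x i
  | .inl (.inr b) => b
  | .inr g => C.nodeVal x g

end Circuit

/-- A two-input Boolean function is in `U₂` iff it is neither XOR nor XNOR. -/
def IsU2 (f : Bool → Bool → Bool) : Prop :=
  f ≠ xor ∧ f ≠ fun a b => !(xor a b)

/-- A `U₂`-circuit: every gate is labeled by a function in `U₂`. -/
def Circuit.IsU2Circuit {ι : Type} (C : Circuit ι) : Prop :=
  ∀ g, IsU2 (C.gate g)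

/-- A deterministic circuit computes `f` if it outputs `f x` on every input `x`. -/
def Circuit.Computes {n : ℕ} (C : Circuit (Fin n)) (f : (Fin n → Bool) → Bool) : Prop :=
  ∀ x, C.eval x = f x

/-- A nondeterministic circuit (with `n` actual inputs and `m` guess inputs)
computes `f` if for every actual input `x`, `f x = 1` iff some setting of the
guess inputs makes the circuit output `1`. -/
def Circuit.ComputesND {n m : ℕ} (C : Circuit (Fin n ⊕ Fin m))
    (f : (Fin n → Bool) → Bool) : Prop :=
  ∀ x, f x = true ↔ ∃ y : Fin m → Bool, C.eval (Sum.elim x y) = true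

/-- `sizeDC f`: the size of the smallest deterministic `U₂`-circuit computing `f`. -/
noncomputable def sizeDC {n : ℕ} (f : (Fin n → Bool) → Bool) : ℕ :=
  sInf {s | ∃ C : Circuit (Fin n), C.IsU2Circuit ∧ C.Computes f ∧ C.size = s}

/-- `sizeNDC f`: the size of the smallest nondeterministic `U₂`-circuit computing `f`. -/
noncomputable def sizeNDC {n : ℕ} (f : (Fin n → Bool) → Bool) : ℕ :=
  sInf {s | ∃ m : ℕ, ∃ C : Circuit (Fin n ⊕ Fin m),
    C.IsU2Circuit ∧ C.ComputesND f ∧ C.size = s}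

/-- `Parity_n`. -/
def parity (n : ℕ) (x : Fin n → Bool) : Bool :=
  decide ((∑ i, (x i).toNat) % 2 = 1)

/-- The inputs `I` together with the values of the gates in `G` numbered below `m`. -/
def signalsBefore {S : Type*} (I : Set S) (val : ℕ → S) (G : Finset ℕ) (m : ℕ) : Set S :=
  I ∪ val '' (↑G ∩ Set.Iio m)

theorem signalsBefore_mono {S : Type*} (I : Set S) (val : ℕ → S) (G : Finset ℕ) :
    Monotone (signalsBefore I val G) := fun _ _ h =>
  Set.union_subset_union_right I
    (Set.image_mono (Set.inter_subset_inter_right _ (Set.Iio_subset_Iio h)))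

section BooleanAlgebra

variable {B C : Type*} [BooleanAlgebra B] [BooleanAlgebra C]

/-- Equality up to complement, written `a ≈ᶜ b`. In particular, `a ≈ᶜ ⊥` says that `a` is one of
the constants `⊥` and `⊤`. -/
def EqUpToCompl (a b : B) : Prop := a = b ∨ a = bᶜ

local infix:50 " ≈ᶜ " => EqUpToCompl

namespace EqUpToCompl

variable {a b c : B}

theorem refl (a : B) : a ≈ᶜ a := Or.inl rfl

theorem symm (h : a ≈ᶜ b) : b ≈ᶜ a := by
  rcases h with rfl | rfl
  · exact refl _
  · exact Or.inr (compl_compl b).symm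

theorem trans (hab : a ≈ᶜ b) (hbc : b ≈ᶜ c) : a ≈ᶜ c := by
  rcases hab with rfl | rfl
  · exact hbc
  · rcases hbc with rfl | rfl
    · exact Or.inr rfl
    · exact Or.inl (compl_compl c)

theorem map (φ : BoundedLatticeHom B C) (h : a ≈ᶜ b) : φ a ≈ᶜ φ b :=
  h.imp (congrArg φ) fun h => (congrArg φ h).trans (map_compl' φ b)

theorem map_eq_map {φ ψ : BoundedLatticeHom B C} (h : a ≈ᶜ b) (hb : φ b = ψ b) : φ a = ψ a := by
  rcases h with rfl | rfl
  · exact hb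
  · rw [map_compl', map_compl', hb]

end EqUpToCompl

/-- `IsLiteral A a` says that `a` is a constant, a member of `A`, or the complement of a member
of `A`: what is available without a gate when the members of `A` are. -/
def IsLiteral (A : Set B) (a : B) : Prop := ∃ b ∈ insert ⊥ A, a ≈ᶜ b

namespace IsLiteral

variable {A A' : Set B} {D : Set C} {a b : B}

theorem of_const (h : a ≈ᶜ ⊥) : IsLiteral A a := ⟨⊥, Set.mem_insert _ _, h⟩

theorem of_mem (h : a ∈ A) : IsLiteral A a := ⟨a, Set.mem_insert_of_mem _ h, .refl a⟩

theorem congr (hb : IsLiteral A b) (h : a ≈ᶜ b) : IsLiteral A a :=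
  let ⟨c, hc, hbc⟩ := hb
  ⟨c, hc, h.trans hbc⟩

theorem mono (ha : IsLiteral A a) (h : A ⊆ A') : IsLiteral A' a :=
  let ⟨b, hb, hab⟩ := ha
  ⟨b, Set.insert_subset_insert h hb, hab⟩

theorem map (φ : BoundedLatticeHom B C) (ha : IsLiteral A a)
    (hA : ∀ b ∈ A, IsLiteral D (φ b)) : IsLiteral D (φ a) := by
  obtain ⟨b, rfl | hb, hab⟩ := ha
  · exact of_const (by simpa only [map_bot] using hab.map φ)
  · exact (hA b hb).congr (hab.map φ)

theorem trans (ha : IsLiteral A a) (hA : ∀ b ∈ A, IsLiteral A' b) : IsLiteral A' a :=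
  ha.map (BoundedLatticeHom.id B) hA

theorem const_inf (ha : a ≈ᶜ ⊥) (hb : IsLiteral A b) : IsLiteral A (a ⊓ b) := by
  rcases ha with rfl | rfl
  · exact of_const (Or.inl (bot_inf_eq b))
  · rwa [compl_bot, top_inf_eq]

end IsLiteral

theorem EqUpToCompl.inf_const {a b : B} (ha : a ≈ᶜ ⊥) (hb : b ≈ᶜ ⊥) : a ⊓ b ≈ᶜ ⊥ := by
  obtain ⟨c, rfl | hc, h⟩ := IsLiteral.const_inf ha (IsLiteral.of_const (A := ∅) hb)
  · exact h
  · exact hc.elim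

theorem EqUpToCompl.isLiteral_inf {A : Set B} {a b c : B} (ha : a ≈ᶜ c) (hb : b ≈ᶜ c)
    (hc : IsLiteral A c) : IsLiteral A (a ⊓ b) := by
  rcases ha with rfl | rfl <;> rcases hb with rfl | rfl
  · rwa [inf_idem]
  · exact .of_const (Or.inl (inf_compl_self a))
  · exact .of_const (Or.inl (compl_inf_self b))
  · rw [inf_idem]
    exact hc.congr (Or.inr rfl)

section SignalsBefore

variable {I : Set B} {val : ℕ → B} {G : Finset ℕ} {g m : ℕ} {a : B}

theorem IsLiteral.of_input (ha : a ∈ I) : IsLiteral (signalsBefore I val G m) a :=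
  .of_mem (Or.inl ha)

theorem IsLiteral.of_gate (hg : g ∈ G) (hgm : g < m) :
    IsLiteral (signalsBefore I val G m) (val g) :=
  .of_mem (Or.inr ⟨g, ⟨hg, hgm⟩, rfl⟩)

end SignalsBefore

/-- A circuit over the inputs `I` in which each gate is, up to complement, the conjunction of two
literals over the inputs and the earlier gates. Wires carry elements of a Boolean algebra, so that
fixing a variable is a homomorphism; gates keep their numbers when others are deleted, so the set
of gates is an arbitrary finite set of numbers. -/
structure AndNetlist (I : Set B) where
  gates : Finset ℕ
  val : ℕ → B
  left : ℕ → B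
  right : ℕ → B
  isLiteral_left : ∀ g ∈ gates, IsLiteral (signalsBefore I val gates g) (left g)
  isLiteral_right : ∀ g ∈ gates, IsLiteral (signalsBefore I val gates g) (right g)
  val_eqUpToCompl : ∀ g ∈ gates, val g ≈ᶜ left g ⊓ right g

namespace AndNetlist

variable {I : Set B} {N : AndNetlist I} {a b f : B} {g h k m : ℕ}

/-- The inputs and the values of the gates numbered below `m`. -/
def before (N : AndNetlist I) (m : ℕ) : Set B := signalsBefore I N.val N.gates m

theorem before_mono (N : AndNetlist I) : Monotone N.before :=
  signalsBefore_mono I N.val N.gates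

/-- The output is a literal over the inputs and finitely many gates. -/
def Computes (N : AndNetlist I) (f : B) : Prop := ∃ m, IsLiteral (N.before m) f

/-- One of the two wires into gate `k` carries `a` or its complement. -/
def Reads (N : AndNetlist I) (k : ℕ) (a : B) : Prop := N.left k ≈ᶜ a ∨ N.right k ≈ᶜ a

/-- A gate is redundant if a literal over the earlier signals can replace it. -/
def IsRedundant (N : AndNetlist I) (g : ℕ) : Prop := IsLiteral (N.before g) (N.val g)

/-- No gate is redundant. -/
def Irredundant (N : AndNetlist I) : Prop := ∀ g ∈ N.gates, ¬ N.IsRedundant g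

theorem exists_val_eqUpToCompl_inf (hk : k ∈ N.gates) (hka : N.Reads k a) :
    ∃ c d, c ≈ᶜ a ∧ IsLiteral (N.before k) d ∧ N.val k ≈ᶜ c ⊓ d := by
  rcases hka with h | h
  · exact ⟨_, _, h, N.isLiteral_right k hk, N.val_eqUpToCompl k hk⟩
  · exact ⟨_, _, h, N.isLiteral_left k hk, inf_comm (N.left k) _ ▸ N.val_eqUpToCompl k hk⟩

section Deletion

theorem isLiteral_signalsBefore_sdiff {R : Finset ℕ} (hR : ∀ g ∈ R, N.IsRedundant g)
    (ha : IsLiteral (N.before m) a) :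
    IsLiteral (signalsBefore I N.val (N.gates \ R) m) a := by
  induction m using Nat.strong_induction_on generalizing a with
  | _ m ih =>
    refine ha.trans ?_
    rintro _ (hb | ⟨g, ⟨hg, hgm⟩, rfl⟩)
    · exact .of_input hb
    · by_cases hgR : g ∈ R
      · exact (ih g hgm (hR g hgR)).mono (signalsBefore_mono _ _ _ hgm.le)
      · exact .of_gate (Finset.mem_sdiff.2 ⟨hg, hgR⟩) hgm

theorem exists_delete_redundant {R : Finset ℕ} (hR : ∀ g ∈ R, N.IsRedundant g)
    (hf : N.Computes f) : ∃ M : AndNetlist I, M.gates = N.gates \ R ∧ M.Computes f := by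
  have mem {g : ℕ} (hg : g ∈ N.gates \ R) : g ∈ N.gates := (Finset.mem_sdiff.1 hg).1
  exact ⟨{ N with
    gates := N.gates \ R
    isLiteral_left := fun g hg => isLiteral_signalsBefore_sdiff hR (N.isLiteral_left g (mem hg))
    isLiteral_right := fun g hg => isLiteral_signalsBefore_sdiff hR (N.isLiteral_right g (mem hg))
    val_eqUpToCompl := fun g hg => N.val_eqUpToCompl g (mem hg) },
    rfl, hf.imp fun _ => isLiteral_signalsBefore_sdiff hR⟩

theorem isLiteral_signalsBefore_erase (ha : IsLiteral (N.before m) a) (hg : ¬ a ≈ᶜ N.val g) :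
    IsLiteral (signalsBefore I N.val (N.gates.erase g) m) a := by
  obtain ⟨b, rfl | hb | ⟨k, ⟨hk, hkm⟩, rfl⟩, hab⟩ := ha
  · exact .of_const hab
  · exact (IsLiteral.of_input hb).congr hab
  · have hkg : k ≠ g := by rintro rfl; exact hg hab
    exact (IsLiteral.of_gate (Finset.mem_erase.2 ⟨hkg, hk⟩) hkm).congr hab

theorem exists_delete_unread (hread : ∀ k ∈ N.gates, ¬ N.Reads k (N.val g))
    (hf : N.Computes f) (hfg : ¬ f ≈ᶜ N.val g) :
    ∃ M : AndNetlist I, M.gates = N.gates.erase g ∧ M.Computes f := by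
  have mem {k : ℕ} (hk : k ∈ N.gates.erase g) : k ∈ N.gates := Finset.mem_of_mem_erase hk
  exact ⟨{ N with
    gates := N.gates.erase g
    isLiteral_left := fun k hk => isLiteral_signalsBefore_erase (N.isLiteral_left k (mem hk))
      fun h => hread k (mem hk) (Or.inl h)
    isLiteral_right := fun k hk => isLiteral_signalsBefore_erase (N.isLiteral_right k (mem hk))
      fun h => hread k (mem hk) (Or.inr h)
    val_eqUpToCompl := fun k hk => N.val_eqUpToCompl k (mem hk) },
    rfl, hf.imp fun _ h => isLiteral_signalsBefore_erase h hfg⟩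

end Deletion

section Map

variable {J : Set C} {φ ψ : BoundedLatticeHom B C}

theorem isLiteral_signalsBefore_map (hφ : ∀ a ∈ I, IsLiteral J (φ a))
    (ha : IsLiteral (N.before m) a) :
    IsLiteral (signalsBefore J (fun g => φ (N.val g)) N.gates m) (φ a) := by
  refine ha.map φ ?_
  rintro b (hb | ⟨g, hg, rfl⟩)
  · exact (hφ b hb).mono Set.subset_union_left
  · exact .of_gate hg.1 hg.2

/-- The image of a circuit under a homomorphism of Boolean algebras, for instance the one that
fixes a variable. -/
def map (N : AndNetlist I) (φ : BoundedLatticeHom B C) (hφ : ∀ a ∈ I, IsLiteral J (φ a)) :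
    AndNetlist J where
  gates := N.gates
  val g := φ (N.val g)
  left g := φ (N.left g)
  right g := φ (N.right g)
  isLiteral_left g hg := isLiteral_signalsBefore_map hφ (N.isLiteral_left g hg)
  isLiteral_right g hg := isLiteral_signalsBefore_map hφ (N.isLiteral_right g hg)
  val_eqUpToCompl g hg := by simpa only [map_inf] using (N.val_eqUpToCompl g hg).map φ

theorem Computes.map (hφ : ∀ a ∈ I, IsLiteral J (φ a)) (hf : N.Computes f) :
    (N.map φ hφ).Computes (φ f) :=
  hf.imp fun _ => isLiteral_signalsBefore_map hφ

theorem isRedundant_map_of_reads (hφ : ∀ a ∈ I, IsLiteral J (φ a)) (hk : k ∈ N.gates)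
    (hka : N.Reads k a) (ha : φ a ≈ᶜ ⊥) : (N.map φ hφ).IsRedundant k := by
  obtain ⟨c, d, hca, hd, hval⟩ := exists_val_eqUpToCompl_inf hk hka
  have hinf : IsLiteral ((N.map φ hφ).before k) (φ c ⊓ φ d) :=
    .const_inf ((hca.map φ).trans ha) (isLiteral_signalsBefore_map hφ hd)
  have hmap : φ (N.val k) ≈ᶜ φ c ⊓ φ d := by simpa only [map_inf] using hval.map φ
  exact hinf.congr hmap

theorem map_val_const_of_reads_reads (hk : k ∈ N.gates) (hka : N.Reads k a) (hkb : N.Reads k b)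
    (hab : ¬ a ≈ᶜ b) (ha : φ a ≈ᶜ ⊥) (hb : φ b ≈ᶜ ⊥) : φ (N.val k) ≈ᶜ ⊥ := by
  have hval : φ (N.val k) ≈ᶜ φ (N.left k) ⊓ φ (N.right k) := by
    simpa only [map_inf] using (N.val_eqUpToCompl k hk).map φ
  refine hval.trans ?_
  rcases hka with hka | hka <;> rcases hkb with hkb | hkb
  · exact absurd (hka.symm.trans hkb) hab
  · exact .inf_const ((hka.map φ).trans ha) ((hkb.map φ).trans hb)
  · exact .inf_const ((hkb.map φ).trans hb) ((hka.map φ).trans ha)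
  · exact absurd (hka.symm.trans hkb) hab

theorem map_eq_map_of_isLiteral (hI : ∀ b ∈ I, ¬ b ≈ᶜ a → φ b = ψ b)
    (hval : ∀ g ∈ N.gates, g < m → φ (N.val g) = ψ (N.val g))
    (hf : IsLiteral (N.before m) f) (hfa : ¬ f ≈ᶜ a) : φ f = ψ f := by
  obtain ⟨b, rfl | hb | ⟨g, ⟨hg, hgm⟩, rfl⟩, hfb⟩ := hf
  · exact hfb.map_eq_map (by rw [map_bot, map_bot])
  · exact hfb.map_eq_map (hI b hb fun hba => hfa (hfb.trans hba))
  · exact hfb.map_eq_map (hval g hg hgm)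

theorem map_val_eq_map_val (hI : ∀ b ∈ I, ¬ b ≈ᶜ a → φ b = ψ b)
    (hread : ∀ g ∈ N.gates, N.Reads g a → φ (N.val g) = ψ (N.val g)) (hg : g ∈ N.gates) :
    φ (N.val g) = ψ (N.val g) := by
  induction g using Nat.strong_induction_on with
  | _ g ih =>
    by_cases hga : N.Reads g a
    · exact hread g hg hga
    · have eq_of_isLiteral {b : B} (hb : IsLiteral (N.before g) b) (hba : ¬ b ≈ᶜ a) : φ b = ψ b :=
        map_eq_map_of_isLiteral hI (fun k hk hkg => ih k hkg hk) hb hba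
      refine (N.val_eqUpToCompl g hg).map_eq_map ?_
      rw [map_inf, map_inf,
        eq_of_isLiteral (N.isLiteral_left g hg) fun h => hga (Or.inl h),
        eq_of_isLiteral (N.isLiteral_right g hg) fun h => hga (Or.inr h)]

theorem Computes.map_eq_map (hf : N.Computes f) (hI : ∀ b ∈ I, ¬ b ≈ᶜ a → φ b = ψ b)
    (hread : ∀ g ∈ N.gates, N.Reads g a → φ (N.val g) = ψ (N.val g)) (hfa : ¬ f ≈ᶜ a) :
    φ f = ψ f :=
  let ⟨_, hlit⟩ := hf
  map_eq_map_of_isLiteral hI (fun _ hg _ => map_val_eq_map_val hI hread hg) hlit hfa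

end Map

section Irredundant

theorem Irredundant.lt_of_reads (hN : N.Irredundant) (hg : g ∈ N.gates) (hk : k ∈ N.gates)
    (hkg : N.Reads k (N.val g)) : g < k := by
  by_contra! hle
  refine hN g hg ?_
  rcases hkg with h | h
  · exact ((N.isLiteral_left k hk).congr h.symm).mono (N.before_mono hle)
  · exact ((N.isLiteral_right k hk).congr h.symm).mono (N.before_mono hle)

theorem Irredundant.not_eqUpToCompl_val (hN : N.Irredundant) (hg : g ∈ N.gates) (ha : a ∈ I) :
    ¬ a ≈ᶜ N.val g := fun h =>
  hN g hg ((IsLiteral.of_input ha).congr h.symm)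

theorem Irredundant.not_reads_const (hN : N.Irredundant) (hg : g ∈ N.gates) (ha : a ≈ᶜ ⊥) :
    ¬ N.Reads g a := by
  intro hga
  obtain ⟨c, d, hca, hd, hval⟩ := exists_val_eqUpToCompl_inf hg hga
  exact hN g hg ((IsLiteral.const_inf (hca.trans ha) hd).congr hval)

theorem Irredundant.exists_gate_on_inputs (hN : N.Irredundant) (hG : N.gates.Nonempty) :
    ∃ g ∈ N.gates, ∃ a ∈ I, ∃ b ∈ I, ¬ a ≈ᶜ b ∧ N.left g ≈ᶜ a ∧ N.right g ≈ᶜ b := by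
  set g := N.gates.min' hG
  have hg : g ∈ N.gates := N.gates.min'_mem hG
  have exists_input {c : B} (hc : IsLiteral (N.before g) c) (hgc : N.Reads g c) :
      ∃ a ∈ I, c ≈ᶜ a := by
    obtain ⟨a, rfl | ha | ⟨k, ⟨hk, hkg⟩, rfl⟩, hca⟩ := hc
    · exact absurd hgc (hN.not_reads_const hg hca)
    · exact ⟨a, ha, hca⟩
    · exact absurd (N.gates.min'_le k hk) (not_le_of_gt hkg)
  obtain ⟨a, ha, hla⟩ := exists_input (N.isLiteral_left g hg) (Or.inl (.refl _))
  obtain ⟨b, hb, hrb⟩ := exists_input (N.isLiteral_right g hg) (Or.inr (.refl _))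
  refine ⟨g, hg, a, ha, b, hb, fun hab => hN g hg ?_, hla, hrb⟩
  exact ((hla.trans hab).isLiteral_inf hrb (.of_input hb)).congr (N.val_eqUpToCompl g hg)

end Irredundant

section Minimal

/-- `N` has the fewest gates among the circuits over `I` that compute `f`. -/
def IsMinimalFor (N : AndNetlist I) (f : B) : Prop :=
  MinimalFor (fun M : AndNetlist I => M.Computes f) (fun M => M.gates.card) N

theorem Computes.exists_isMinimalFor (hf : N.Computes f) :
    ∃ M : AndNetlist I, M.IsMinimalFor f ∧ M.gates.card ≤ N.gates.card :=
  let ⟨M, hM⟩ := exists_minimalFor_of_wellFoundedLT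
    (fun M : AndNetlist I => M.Computes f) (fun M => M.gates.card) ⟨N, hf⟩
  ⟨M, hM, hM.le hf⟩

theorem IsMinimalFor.irredundant (hN : N.IsMinimalFor f) : N.Irredundant := by
  intro g hg hred
  obtain ⟨M, hM, hMf⟩ := exists_delete_redundant (R := {g}) (by simpa using hred) hN.prop
  refine hN.not_prop_of_lt ?_ hMf
  rw [hM, Finset.sdiff_singleton_eq_erase]
  exact Finset.card_erase_lt_of_mem hg

theorem IsMinimalFor.exists_reads (hN : N.IsMinimalFor f) (hg : g ∈ N.gates)
    (hfg : ¬ f ≈ᶜ N.val g) : ∃ k ∈ N.gates, N.Reads k (N.val g) := by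
  by_contra! hread
  obtain ⟨M, hM, hMf⟩ := exists_delete_unread hread hN.prop hfg
  refine hN.not_prop_of_lt ?_ hMf
  rw [hM]
  exact Finset.card_erase_lt_of_mem hg

theorem IsMinimalFor.exists_three_redundant_map {J : Set C} {φ : BoundedLatticeHom B C}
    (hN : N.IsMinimalFor f) (hφ : ∀ a ∈ I, IsLiteral J (φ a)) (hg : g ∈ N.gates)
    (hh : h ∈ N.gates) (hhg : h ≠ g) (haI : a ∈ I) (hga : N.Reads g a) (hha : N.Reads h a)
    (ha : φ a ≈ᶜ ⊥) (hgφ : φ (N.val g) ≈ᶜ ⊥) (hfφ : ¬ φ f ≈ᶜ ⊥) :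
    ∃ R ⊆ N.gates, R.card = 3 ∧ ∀ k ∈ R, (N.map φ hφ).IsRedundant k := by
  have exists_reader {g' : ℕ} (hg' : g' ∈ N.gates) (hconst : φ (N.val g') ≈ᶜ ⊥) :
      ∃ k ∈ N.gates, N.Reads k (N.val g') ∧ g' < k := by
    obtain ⟨k, hk, hkg⟩ := hN.exists_reads hg' fun hf => hfφ ((hf.map φ).trans hconst)
    exact ⟨k, hk, hkg, hN.irredundant.lt_of_reads hg' hk hkg⟩
  suffices hthird : ∃ k ∈ N.gates, k ≠ g ∧ k ≠ h ∧ (N.map φ hφ).IsRedundant k by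
    obtain ⟨k, hk, hkg, hkh, hkred⟩ := hthird
    refine ⟨{g, h, k}, ?_, Finset.card_eq_three.2 ⟨g, h, k, hhg.symm, hkg.symm, hkh.symm, rfl⟩, ?_⟩
    · simp only [Finset.insert_subset_iff, Finset.singleton_subset_iff]
      exact ⟨hg, hh, hk⟩
    · simp only [Finset.mem_insert, Finset.mem_singleton, forall_eq_or_imp, forall_eq]
      exact ⟨isRedundant_map_of_reads hφ hg hga ha, isRedundant_map_of_reads hφ hh hha ha, hkred⟩
  obtain ⟨k, hk, hkg, hgk⟩ := exists_reader hg hgφ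
  by_cases hkh : k = h
  · subst hkh
    have hkφ : φ (N.val k) ≈ᶜ ⊥ := map_val_const_of_reads_reads hk hha hkg
      (hN.irredundant.not_eqUpToCompl_val hg haI) ha hgφ
    obtain ⟨l, hl, hlk, hkl⟩ := exists_reader hk hkφ
    exact ⟨l, hl, (hgk.trans hkl).ne', hkl.ne', isRedundant_map_of_reads hφ hl hlk hkφ⟩
  · exact ⟨k, hk, hgk.ne', hkh, isRedundant_map_of_reads hφ hk hkg hgφ⟩

end Minimal

end AndNetlist

section EverywhereSensitive

variable {ι : Type*} [DecidableEq ι] {V : Finset ι} {f e : (ι → Bool) → Bool} {i j : ι}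

/-- Fixing the variable `i` to the constant `c`, as a homomorphism on Boolean functions. -/
def restrictVar (i : ι) (c : Bool) :
    BoundedLatticeHom ((ι → Bool) → Bool) ((ι → Bool) → Bool) where
  toFun f x := f (Function.update x i c)
  map_sup' _ _ := rfl
  map_inf' _ _ := rfl
  map_top' := rfl
  map_bot' := rfl

theorem restrictVar_apply (i : ι) (c : Bool) (f : (ι → Bool) → Bool) (x : ι → Bool) :
    restrictVar i c f x = f (Function.update x i c) := rfl

theorem restrictVar_eval_self (i : ι) (c : Bool) :
    restrictVar i c (Function.eval i) = fun _ => c := by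
  funext x
  simp [restrictVar_apply]

theorem restrictVar_eval_of_ne (hji : j ≠ i) (c : Bool) :
    restrictVar i c (Function.eval j) = Function.eval j := by
  funext x
  simp [restrictVar_apply, hji]

theorem restrictVar_eval_const (i : ι) (c : Bool) :
    restrictVar i c (Function.eval i) ≈ᶜ ⊥ := by
  rw [restrictVar_eval_self]
  cases c
  · exact Or.inl rfl
  · exact Or.inr rfl

theorem EqUpToCompl.exists_restrictVar_eq_bot (h : f ≈ᶜ Function.eval i) :
    ∃ c, restrictVar i c f = ⊥ := by
  rcases h with rfl | rfl
  · exact ⟨false, restrictVar_eval_self i false⟩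
  · refine ⟨true, ?_⟩
    rw [map_compl', restrictVar_eval_self]
    rfl

theorem isLiteral_restrictVar_eval (i : ι) (c : Bool) :
    ∀ e ∈ Function.eval '' (V : Set ι),
      IsLiteral (Function.eval '' (V.erase i : Set ι)) (restrictVar i c e) := by
  rintro _ ⟨j, hj, rfl⟩
  by_cases hji : j = i
  · subst hji
    exact .of_const (restrictVar_eval_const j c)
  · rw [restrictVar_eval_of_ne hji]
    exact .of_mem ⟨j, Finset.mem_erase.2 ⟨hji, hj⟩, rfl⟩

/-- Changing the value of any variable in `V` always changes the value of `f`. -/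
def EverywhereSensitive (V : Finset ι) (f : (ι → Bool) → Bool) : Prop :=
  ∀ i ∈ V, ∀ x, f (Function.update x i true) ≠ f (Function.update x i false)

theorem EverywhereSensitive.map_restrictVar (hf : EverywhereSensitive V f) (i : ι) (c : Bool) :
    EverywhereSensitive (V.erase i) (restrictVar i c f) := by
  intro j hj x
  obtain ⟨hji, hjV⟩ := Finset.mem_erase.1 hj
  rw [restrictVar_apply, restrictVar_apply, Function.update_comm hji, Function.update_comm hji]
  exact hf j hjV _

theorem EverywhereSensitive.restrictVar_ne (hf : EverywhereSensitive V f) (hi : i ∈ V) :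
    restrictVar i true f ≠ restrictVar i false f := fun h =>
  hf i hi (fun _ => false) (congrFun h _)

theorem EverywhereSensitive.not_eqUpToCompl (hf : EverywhereSensitive V f) (hi : i ∈ V)
    (he : restrictVar i true e = restrictVar i false e) : ¬ f ≈ᶜ e := fun h =>
  hf.restrictVar_ne hi (h.map_eq_map he)

theorem EverywhereSensitive.not_const (hf : EverywhereSensitive V f) (hV : V.Nonempty) :
    ¬ f ≈ᶜ ⊥ :=
  let ⟨_, hi⟩ := hV
  hf.not_eqUpToCompl hi rfl

theorem EverywhereSensitive.not_eval (hf : EverywhereSensitive V f) (hj : j ∈ V) (hij : i ≠ j) :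
    ¬ f ≈ᶜ Function.eval i :=
  hf.not_eqUpToCompl hj (by rw [restrictVar_eval_of_ne hij, restrictVar_eval_of_ne hij])

namespace AndNetlist

variable {N : AndNetlist (Function.eval '' (V : Set ι) : Set ((ι → Bool) → Bool))} {g : ℕ}

theorem Computes.gates_nonempty (hNf : N.Computes f) (hf : EverywhereSensitive V f)
    (hV : 1 < V.card) : N.gates.Nonempty := by
  obtain ⟨m, e, rfl | ⟨i, -, rfl⟩ | ⟨g, ⟨hg, -⟩, -⟩, hfe⟩ := hNf
  · exact absurd hfe (hf.not_const (Finset.card_pos.1 (by lia)))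
  · obtain ⟨j, hj, hji⟩ := Finset.exists_mem_ne hV i
    exact absurd hfe (hf.not_eval hj hji.symm)
  · exact ⟨g, hg⟩

/-- If `g` were the only gate to read the variable `i`, fixing its other input `j` so as to make
`g` constant would leave `f` independent of `i`. -/
theorem Computes.exists_second_reader (hNf : N.Computes f) (hf : EverywhereSensitive V f)
    (hi : i ∈ V) (hj : j ∈ V) (hij : i ≠ j) (hgj : N.right g ≈ᶜ Function.eval j) :
    ∃ h ∈ N.gates, h ≠ g ∧ N.Reads h (Function.eval i) := by
  by_contra! honly
  obtain ⟨q, hq⟩ := hgj.exists_restrictVar_eq_bot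
  let fix (c : Bool) := (restrictVar i c).comp (restrictVar j q)
  have hinput (e : (ι → Bool) → Bool) (he : e ∈ Function.eval '' (V : Set ι))
      (hei : ¬ e ≈ᶜ Function.eval i) : fix true e = fix false e := by
    obtain ⟨l, -, rfl⟩ := he
    have hli : l ≠ i := by rintro rfl; exact hei (.refl _)
    simp only [fix, BoundedLatticeHom.comp_apply]
    by_cases hlj : l = j
    · rw [hlj, restrictVar_eval_self]
      rfl
    · rw [restrictVar_eval_of_ne hlj, restrictVar_eval_of_ne hli, restrictVar_eval_of_ne hli]
  have hgate (k : ℕ) (hk : k ∈ N.gates) (hki : N.Reads k (Function.eval i)) :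
      fix true (N.val k) = fix false (N.val k) := by
    obtain rfl : k = g := by_contra fun hkg => honly k hk hkg hki
    refine (N.val_eqUpToCompl k hk).map_eq_map ?_
    simp only [fix, BoundedLatticeHom.comp_apply, map_inf, hq, map_bot, inf_bot_eq]
  exact (hf.map_restrictVar j q).restrictVar_ne (Finset.mem_erase.2 ⟨hij, hi⟩)
    (hNf.map_eq_map hinput hgate (hf.not_eval hj hij))

theorem IsMinimalFor.exists_restrictVar_three_redundant (hN : N.IsMinimalFor f)
    (hf : EverywhereSensitive V f) (hV : 1 < V.card) :
    ∃ i ∈ V, ∃ c, ∃ R ⊆ N.gates, R.card = 3 ∧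
      ∀ k ∈ R, (N.map (restrictVar i c) (isLiteral_restrictVar_eval i c)).IsRedundant k := by
  obtain ⟨g, hg, _, ⟨i, hi, rfl⟩, _, ⟨j, hj, rfl⟩, hij, hgi, hgj⟩ :=
    hN.irredundant.exists_gate_on_inputs (hN.prop.gates_nonempty hf hV)
  have hne : i ≠ j := by rintro rfl; exact hij (.refl _)
  obtain ⟨h, hh, hhg, hhi⟩ := hN.prop.exists_second_reader hf hi hj hne hgj
  obtain ⟨c, hc⟩ := hgi.exists_restrictVar_eq_bot
  have hgc : restrictVar i c (N.val g) ≈ᶜ ⊥ := by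
    simpa only [map_inf, hc, bot_inf_eq] using (N.val_eqUpToCompl g hg).map (restrictVar i c)
  have hfc : ¬ restrictVar i c f ≈ᶜ ⊥ :=
    (hf.map_restrictVar i c).not_const ⟨j, Finset.mem_erase.2 ⟨hne.symm, hj⟩⟩
  exact ⟨i, hi, c, hN.exists_three_redundant_map (isLiteral_restrictVar_eval i c) hg hh hhg
    ⟨i, hi, rfl⟩ (Or.inl hgi) hhi (restrictVar_eval_const i c) hgc hfc⟩

theorem Computes.three_mul_card_sub_one_le (hNf : N.Computes f)
    (hf : EverywhereSensitive V f) : 3 * (V.card - 1) ≤ N.gates.card := by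
  induction hn : V.card generalizing V f with
  | zero => simp
  | succ n ih =>
    rcases Nat.eq_zero_or_pos n with rfl | hpos
    · simp
    obtain ⟨M, hM, hMN⟩ := hNf.exists_isMinimalFor
    obtain ⟨i, hi, c, R, hRM, hR, hred⟩ := hM.exists_restrictVar_three_redundant hf (by lia)
    have hcomp := hM.prop.map (isLiteral_restrictVar_eval i c)
    obtain ⟨K, hK, hKf⟩ := exists_delete_redundant hred hcomp
    have hle : 3 * (n - 1) ≤ K.gates.card :=
      ih hKf (hf.map_restrictVar i c) (by rw [Finset.card_erase_of_mem hi]; lia)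
    have hcard : K.gates.card + 3 = M.gates.card := by
      rw [hK, ← hR]
      exact Finset.card_sdiff_add_card_eq_card hRM
    lia

end AndNetlist

end EverywhereSensitive

section CircuitToNetlist

theorem isLiteral_comp {α : Type*} (u : Bool → Bool) (a : α → Bool) :
    IsLiteral {a} (u ∘ a) := by
  have hu : ∀ u : Bool → Bool, u = (fun _ => false) ∨ u = (fun _ => true) ∨ u = id ∨ u = not := by
    decide
  have ha : IsLiteral {a} a := .of_mem rfl
  rcases hu u with rfl | rfl | rfl | rfl
  · exact .of_const (Or.inl rfl)
  · exact .of_const (Or.inr rfl)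
  · exact ha
  · exact ha.congr (Or.inr rfl)

theorem IsU2.exists_eq_xor_and {φ : Bool → Bool → Bool} (h : IsU2 φ) :
    ∃ (s : Bool) (u v : Bool → Bool), ∀ a b, φ a b = (s ^^ (u a && v b)) := by
  revert φ
  unfold IsU2
  decide

theorem IsU2.exists_inf {α : Type*} {φ : Bool → Bool → Bool} (h : IsU2 φ) {A : Set (α → Bool)}
    {a b : α → Bool} (ha : IsLiteral A a) (hb : IsLiteral A b) :
    ∃ c d, IsLiteral A c ∧ IsLiteral A d ∧ (fun x => φ (a x) (b x)) ≈ᶜ c ⊓ d := by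
  obtain ⟨s, u, v, hφ⟩ := h.exists_eq_xor_and
  refine ⟨u ∘ a, v ∘ b, (isLiteral_comp u a).trans ?_, (isLiteral_comp v b).trans ?_, ?_⟩
  · simpa only [Set.mem_singleton_iff, forall_eq] using ha
  · simpa only [Set.mem_singleton_iff, forall_eq] using hb
  · cases s
    · exact Or.inl (funext fun x => by simp [hφ])
    · exact Or.inr (funext fun x => by simp [hφ])

theorem AndNetlist.exists_of_forall_exists_inf {B : Type*} [BooleanAlgebra B] {I : Set B}
    {val : ℕ → B} {G : Finset ℕ}
    (h : ∀ g ∈ G, ∃ a b, IsLiteral (signalsBefore I val G g) a ∧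
      IsLiteral (signalsBefore I val G g) b ∧ val g ≈ᶜ a ⊓ b) :
    ∃ N : AndNetlist I, N.gates = G ∧ N.val = val := by
  choose! left right hleft hright hval using h
  exact ⟨⟨G, val, left, right, hleft, hright, hval⟩, rfl, rfl⟩

namespace Circuit

variable {ι : Type}

/-- The value of a wire, given the inputs `x` and the values `v` of the gates it may come from. -/
def wireVal {N : ℕ} (x : ι → Bool) (v : Fin N → Bool) (w : (ι ⊕ Bool) ⊕ Fin N) : Bool :=
  w.elim (Sum.elim x id) v

theorem nodeVal_eq_gate (C : Circuit ι) (x : ι → Bool) (g : Fin C.size) :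
    C.nodeVal x g =
      C.gate g (wireVal x (fun h => C.nodeVal x (h.castLE g.isLt.le)) (C.in1 g))
        (wireVal x (fun h => C.nodeVal x (h.castLE g.isLt.le)) (C.in2 g)) := by
  rw [nodeVal]
  congr 1
  · rcases C.in1 g with (i | b) | h <;> rfl
  · rcases C.in2 g with (i | b) | h <;> rfl

theorem eval_eq_wireVal (C : Circuit ι) (x : ι → Bool) :
    C.eval x = wireVal x (C.nodeVal x) C.out := by
  rw [eval]
  rcases C.out with (i | b) | g <;> rfl

/-- The function computed by gate number `g`, with the junk value `false` for `C.size ≤ g`. -/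
def gateFun (C : Circuit ι) (g : ℕ) : (ι → Bool) → Bool :=
  fun x => if h : g < C.size then C.nodeVal x ⟨g, h⟩ else false

theorem gateFun_of_lt (C : Circuit ι) {g : ℕ} (hg : g < C.size) :
    C.gateFun g = fun x => C.nodeVal x ⟨g, hg⟩ :=
  funext fun _ => dif_pos hg

variable [Fintype ι]

theorem isLiteral_wireVal (C : Circuit ι) {m : ℕ} (hm : m ≤ C.size) (w : (ι ⊕ Bool) ⊕ Fin m) :
    IsLiteral
      (signalsBefore (Function.eval '' ((Finset.univ : Finset ι) : Set ι)) C.gateFun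
        (Finset.range C.size) m)
      (fun x => wireVal x (fun h => C.nodeVal x (h.castLE hm)) w) := by
  rcases w with (i | b) | h
  · exact .of_input ⟨i, Finset.mem_coe.2 (Finset.mem_univ i), rfl⟩
  · cases b
    · exact .of_const (Or.inl rfl)
    · exact .of_const (Or.inr rfl)
  · have hh : (h : ℕ) < C.size := h.isLt.trans_le hm
    have hlit := IsLiteral.of_gate (I := Function.eval '' ((Finset.univ : Finset ι) : Set ι))
      (val := C.gateFun) (Finset.mem_range.2 hh) h.isLt
    rwa [C.gateFun_of_lt hh] at hlit

theorem IsU2Circuit.exists_andNetlist {C : Circuit ι} (hC : C.IsU2Circuit) :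
    ∃ N : AndNetlist (Function.eval '' ((Finset.univ : Finset ι) : Set ι)),
      N.gates.card = C.size ∧ N.Computes C.eval := by
  obtain ⟨N, hgates, hval⟩ := AndNetlist.exists_of_forall_exists_inf
    (I := Function.eval '' ((Finset.univ : Finset ι) : Set ι)) (val := C.gateFun)
    (G := Finset.range C.size) <| by
    intro g hg
    have hg := Finset.mem_range.1 hg
    simpa only [C.gateFun_of_lt hg, ← C.nodeVal_eq_gate] using
      (hC ⟨g, hg⟩).exists_inf (C.isLiteral_wireVal hg.le (C.in1 ⟨g, hg⟩))
        (C.isLiteral_wireVal hg.le (C.in2 ⟨g, hg⟩))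
  refine ⟨N, by rw [hgates, Finset.card_range], C.size, ?_⟩
  rw [AndNetlist.before, hgates, hval, funext C.eval_eq_wireVal]
  exact C.isLiteral_wireVal le_rfl C.out

theorem IsU2Circuit.three_mul_card_sub_one_le [DecidableEq ι] {C : Circuit ι}
    (hC : C.IsU2Circuit) (hsens : EverywhereSensitive Finset.univ C.eval) :
    3 * (Fintype.card ι - 1) ≤ C.size := by
  obtain ⟨N, hcard, hN⟩ := hC.exists_andNetlist
  rw [← hcard]
  exact hN.three_mul_card_sub_one_le hsens

end Circuit

end CircuitToNetlist

end BooleanAlgebra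

section Parity

variable {ι : Type*}

/-- The parity of the number of variables in `S` set to `true`. -/
def parityOn (S : Finset ι) (x : ι → Bool) : Bool := Nat.bodd (∑ i ∈ S, (x i).toNat)

theorem parity_eq_parityOn (n : ℕ) : parity n = parityOn Finset.univ := by
  funext x
  rw [parity, parityOn, Nat.mod_two_of_bodd]
  cases Nat.bodd (∑ i, (x i).toNat) <;> rfl

theorem parityOn_singleton (i : ι) (x : ι → Bool) : parityOn {i} x = x i := by
  rw [parityOn, Finset.sum_singleton]
  cases x i <;> rfl

theorem parityOn_cons {S : Finset ι} {i : ι} (hi : i ∉ S) (x : ι → Bool) :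
    parityOn (S.cons i hi) x = (x i ^^ parityOn S x) := by
  rw [parityOn, Finset.sum_cons, Nat.bodd_add, parityOn]
  cases x i <;> rfl

theorem parityOn_congr {S : Finset ι} {x y : ι → Bool} (h : ∀ i ∈ S, x i = y i) :
    parityOn S x = parityOn S y := by
  rw [parityOn, parityOn, Finset.sum_congr rfl fun i hi => by rw [h i hi]]

theorem everywhereSensitive_parityOn [DecidableEq ι] (S : Finset ι) :
    EverywhereSensitive S (parityOn S) := by
  intro i hi x
  have hrest : parityOn (S.erase i) (Function.update x i true) =
      parityOn (S.erase i) (Function.update x i false) := parityOn_congr fun j hj => by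
    rw [Function.update_of_ne (Finset.ne_of_mem_erase hj),
      Function.update_of_ne (Finset.ne_of_mem_erase hj)]
  rw [← Finset.insert_erase hi, ← Finset.cons_eq_insert _ _ (Finset.notMem_erase i S),
    parityOn_cons, parityOn_cons, hrest, Function.update_self, Function.update_self]
  simp

end Parity

namespace Circuit

variable {ι : Type}

/-- The circuit `C` followed by a gate `φ` reading the wires `u` and `v`, which becomes the
output. It is reducible so that its size unfolds to `C.size + 1` in the types of gates and wires. -/
abbrev snoc (C : Circuit ι) (φ : Bool → Bool → Bool) (u v : (ι ⊕ Bool) ⊕ Fin C.size) :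
    Circuit ι where
  size := C.size + 1
  gate := Fin.lastCases φ C.gate
  in1 := Fin.lastCases (motive := fun g => (ι ⊕ Bool) ⊕ Fin g.val) u C.in1
  in2 := Fin.lastCases (motive := fun g => (ι ⊕ Bool) ⊕ Fin g.val) v C.in2
  out := .inr (Fin.last C.size)

variable {C : Circuit ι} {φ : Bool → Bool → Bool} {u v : (ι ⊕ Bool) ⊕ Fin C.size}

theorem nodeVal_snoc_castSucc (x : ι → Bool) (g : Fin C.size) :
    (C.snoc φ u v).nodeVal x g.castSucc = C.nodeVal x g := by
  induction hm : g.val using Nat.strong_induction_on generalizing g with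
  | _ m ih =>
    subst hm
    have hearlier : (fun h : Fin g => (C.snoc φ u v).nodeVal x (h.castLE g.castSucc.isLt.le)) =
        fun h : Fin g => C.nodeVal x (h.castLE g.isLt.le) :=
      funext fun h => ih h h.isLt (h.castLE g.isLt.le) rfl
    have hgate : (C.snoc φ u v).gate g.castSucc = C.gate g := by
      simp only [Fin.lastCases_castSucc]
    have hin1 : (C.snoc φ u v).in1 g.castSucc = C.in1 g := by
      simp only [snoc, Fin.lastCases_castSucc]
    have hin2 : (C.snoc φ u v).in2 g.castSucc = C.in2 g := by
      simp only [snoc, Fin.lastCases_castSucc]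
    rw [nodeVal_eq_gate, nodeVal_eq_gate, hgate, hin1, hin2]
    exact congrArg₂ (C.gate g) (congrArg (wireVal x · (C.in1 g)) hearlier)
      (congrArg (wireVal x · (C.in2 g)) hearlier)

theorem eval_snoc (x : ι → Bool) :
    (C.snoc φ u v).eval x = φ (wireVal x (C.nodeVal x) u) (wireVal x (C.nodeVal x) v) := by
  have hearlier : (fun h : Fin C.size => (C.snoc φ u v).nodeVal x h.castSucc) = C.nodeVal x :=
    funext (nodeVal_snoc_castSucc x)
  have hgate : (C.snoc φ u v).gate (Fin.last C.size) = φ := by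
    simp only [Fin.lastCases_last]
  have hin1 : (C.snoc φ u v).in1 (Fin.last C.size) = u := by
    simp only [snoc, Fin.lastCases_last]
  have hin2 : (C.snoc φ u v).in2 (Fin.last C.size) = v := by
    simp only [snoc, Fin.lastCases_last]
  rw [← hearlier]
  change (C.snoc φ u v).nodeVal x (Fin.last C.size) = _
  rw [nodeVal_eq_gate, hgate, hin1, hin2]
  rfl

theorem IsU2Circuit.snoc (hC : C.IsU2Circuit) (hφ : IsU2 φ) : (C.snoc φ u v).IsU2Circuit := by
  intro g
  cases g using Fin.lastCases with
  | last => simpa only [Circuit.snoc, Fin.lastCases_last] using hφ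
  | cast g => simpa only [Circuit.snoc, Fin.lastCases_castSucc] using hC g

/-- A wire of a circuit with `N` gates, as a wire of the circuit with one more gate. -/
def liftWire {N : ℕ} (w : (ι ⊕ Bool) ⊕ Fin N) : (ι ⊕ Bool) ⊕ Fin (N + 1) :=
  w.map id Fin.castSucc

theorem wireVal_liftWire_out (x : ι → Bool) :
    wireVal x ((C.snoc φ u v).nodeVal x) (liftWire C.out) = C.eval x := by
  rw [eval_eq_wireVal]
  rcases C.out with w | g
  · rfl
  · exact nodeVal_snoc_castSucc x g

theorem IsU2Circuit.exists_eval_xor (hC : C.IsU2Circuit) (i : ι) :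
    ∃ D : Circuit ι, D.IsU2Circuit ∧ D.size = C.size + 3 ∧ ∀ x, D.eval x = (x i ^^ C.eval x) := by
  let xi {N : ℕ} : (ι ⊕ Bool) ⊕ Fin N := .inl (.inl i)
  let C₁ := C.snoc (fun a b => a && !b) C.out xi
  let C₂ := C₁.snoc (fun a b => !a && b) (liftWire C.out) xi
  let C₃ := C₂.snoc or (liftWire C₁.out) C₂.out
  have hC₁ : C₁.IsU2Circuit := hC.snoc (by unfold IsU2; decide)
  have hC₂ : C₂.IsU2Circuit := hC₁.snoc (by unfold IsU2; decide)
  refine ⟨C₃, hC₂.snoc (by unfold IsU2; decide), rfl, fun x => ?_⟩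
  have heval₁ : C₁.eval x = (C.eval x && !x i) := by
    rw [eval_snoc, ← eval_eq_wireVal]
    rfl
  have heval₂ : C₂.eval x = (!C.eval x && x i) := by
    rw [eval_snoc (C := C₁), wireVal_liftWire_out]
    rfl
  rw [eval_snoc, wireVal_liftWire_out, ← eval_eq_wireVal, heval₁, heval₂]
  cases C.eval x <;> cases x i <;> rfl

theorem exists_eval_eq_parityOn {S : Finset ι} (hS : S.Nonempty) :
    ∃ C : Circuit ι, C.IsU2Circuit ∧ C.eval = parityOn S ∧ C.size = 3 * (S.card - 1) := by
  induction hS using Finset.Nonempty.cons_induction with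
  | singleton i =>
    exact ⟨⟨0, Fin.elim0, fun g => g.elim0, fun g => g.elim0, .inl (.inl i)⟩, fun g => g.elim0,
      funext fun x => (parityOn_singleton i x).symm, by simp⟩
  | cons i S hi hS ih =>
    obtain ⟨C, hC, heval, hsize⟩ := ih
    obtain ⟨D, hD, hDsize, hDeval⟩ := hC.exists_eval_xor i
    refine ⟨D, hD, funext fun x => by rw [hDeval, heval, parityOn_cons], ?_⟩
    have hpos := hS.card_pos
    rw [hDsize, hsize, Finset.card_cons]
    lia

end Circuit

/-- For every `n ≥ 2`, the minimum size of a deterministic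
`U₂`-circuit computing `Parity_n` equals `3(n-1)`. -/
theorem sizeDC_parity (n : ℕ) (hn : 2 ≤ n) : sizeDC (parity n) = 3 * (n - 1) := by
  have : Nonempty (Fin n) := ⟨⟨0, by lia⟩⟩
  obtain ⟨C, hC, heval, hsize⟩ := Circuit.exists_eval_eq_parityOn
    (Finset.univ_nonempty (α := Fin n))
  refine IsLeast.csInf_eq ⟨⟨C, hC, ?_, ?_⟩, ?_⟩
  · rw [parity_eq_parityOn]
    exact congrFun heval
  · rw [hsize, Finset.card_univ, Fintype.card_fin]
  · rintro _ ⟨D, hD, hcomp, rfl⟩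
    have hsens : EverywhereSensitive Finset.univ D.eval := by
      rw [funext hcomp, parity_eq_parityOn]
      exact everywhereSensitive_parityOn _
    simpa only [Fintype.card_fin] using hD.three_mul_card_sub_one_le hsens
end

section
/- For every n ≥ 2, every deterministic U_2-circuit computing the parity function Parity_n has at least 3(n-1) gates. -/
/-!
Gate elimination (Schnorr): a function that flips with each of at least two variables keeps this
property when one of them is fixed, so it suffices to fix one variable and lose three gates. In a
minimal circuit the first gate `G` is a conjunction, up to negations, of two distinct variables
`xᵢ` and `xⱼ`. Some other gate `A` reads `xᵢ`: otherwise fixing `G` through `xⱼ` would make the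
output independent of `xᵢ`. Some gate `B` reads `G`, for `G` alone is not the output. No gate needs
both `xᵢ` and `G`, because a conjunction of them is already a conjunction of `xᵢ` and `xⱼ`; hence
`A ≠ B`. Fixing `xᵢ` so that `G` becomes constant makes all of `G`, `A`, `B` redundant.

Circuits are handled semantically: a gate is identified with the function it computes, wires carry
functions up to a unary Boolean function, and eliminating a gate only shrinks the set of gates.
-/

section Closure

variable {α β : Type*} {S : Set (α → Bool)} {S' : Set (β → Bool)}

/-- The functions a wire can carry when its sources are the functions in `S`: a constant, or a
source up to a unary Boolean function. Allowing unary functions lets a redundant gate be bypassed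
without relabelling the gates that read it. -/
def unaryClosure (S : Set (α → Bool)) : Set (α → Bool) :=
  {w | (∃ c, w = fun _ => c) ∨ ∃ u ∈ S, ∃ φ : Bool → Bool, w = φ ∘ u}

/-- The functions a `U₂`-gate can compute when its sources are the functions in `S`, in the normal
form of a conjunction of two wires followed by a unary Boolean function. -/
def andClosure (S : Set (α → Bool)) : Set (α → Bool) :=
  {w | ∃ a ∈ unaryClosure S, ∃ b ∈ unaryClosure S, ∃ φ : Bool → Bool, w = fun x => φ (a x && b x)}

theorem const_mem_unaryClosure (c : Bool) : (fun _ => c) ∈ unaryClosure S :=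
  .inl ⟨c, rfl⟩

theorem subset_unaryClosure : S ⊆ unaryClosure S :=
  fun u hu => .inr ⟨u, hu, id, rfl⟩

theorem comp_mem_unaryClosure {w : α → Bool} (φ : Bool → Bool) (hw : w ∈ unaryClosure S) :
    φ ∘ w ∈ unaryClosure S := by
  obtain ⟨c, rfl⟩ | ⟨u, hu, ψ, rfl⟩ := hw
  exacts [const_mem_unaryClosure (φ c), .inr ⟨u, hu, φ ∘ ψ, rfl⟩]

theorem precomp_mem_unaryClosure {ρ : β → α} (hρ : ∀ u ∈ S, u ∘ ρ ∈ unaryClosure S')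
    {w : α → Bool} (hw : w ∈ unaryClosure S) : w ∘ ρ ∈ unaryClosure S' := by
  obtain ⟨c, rfl⟩ | ⟨u, hu, φ, rfl⟩ := hw
  exacts [const_mem_unaryClosure c, comp_mem_unaryClosure φ (hρ u hu)]

theorem precomp_mem_andClosure {ρ : β → α} (hρ : ∀ u ∈ S, u ∘ ρ ∈ unaryClosure S')
    {w : α → Bool} (hw : w ∈ andClosure S) : w ∘ ρ ∈ andClosure S' := by
  obtain ⟨a, ha, b, hb, φ, rfl⟩ := hw
  exact ⟨a ∘ ρ, precomp_mem_unaryClosure hρ ha, b ∘ ρ, precomp_mem_unaryClosure hρ hb, φ, rfl⟩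

theorem precomp_union_image_mem_unaryClosure {κ : Type*} {ρ : β → α}
    (hρ : ∀ u ∈ S, u ∘ ρ ∈ unaryClosure S') (v : κ → α → Bool) (A : Set κ) :
    ∀ u ∈ S ∪ v '' A, u ∘ ρ ∈ unaryClosure (S' ∪ (fun g => v g ∘ ρ) '' A) := by
  rintro _ (hu | ⟨h, hh, rfl⟩)
  · obtain ⟨c, hc⟩ | ⟨w, hw, φ, hφ⟩ := hρ _ hu
    exacts [.inl ⟨c, hc⟩, .inr ⟨w, .inl hw, φ, hφ⟩]
  · exact .inr ⟨v h ∘ ρ, .inr ⟨h, hh, rfl⟩, id, rfl⟩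

theorem unaryClosure_subset {S' : Set (α → Bool)} (h : S ⊆ unaryClosure S') :
    unaryClosure S ⊆ unaryClosure S' :=
  fun _ => precomp_mem_unaryClosure (ρ := id) h

theorem andClosure_subset {S' : Set (α → Bool)} (h : S ⊆ unaryClosure S') :
    andClosure S ⊆ andClosure S' :=
  fun _ => precomp_mem_andClosure (ρ := id) h

theorem unaryClosure_mono {S' : Set (α → Bool)} (h : S ⊆ S') :
    unaryClosure S ⊆ unaryClosure S' :=
  unaryClosure_subset (h.trans subset_unaryClosure)

theorem andClosure_mono {S' : Set (α → Bool)} (h : S ⊆ S') : andClosure S ⊆ andClosure S' :=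
  andClosure_subset (h.trans subset_unaryClosure)

theorem eq_of_mem_unaryClosure {x y : α} (hS : ∀ u ∈ S, u x = u y) {w : α → Bool}
    (hw : w ∈ unaryClosure S) : w x = w y := by
  obtain ⟨c, rfl⟩ | ⟨u, hu, φ, rfl⟩ := hw
  exacts [rfl, congrArg φ (hS u hu)]

theorem eq_of_mem_andClosure {x y : α} (hS : ∀ u ∈ S, u x = u y) {w : α → Bool}
    (hw : w ∈ andClosure S) : w x = w y := by
  obtain ⟨a, ha, b, hb, φ, rfl⟩ := hw
  simp only [eq_of_mem_unaryClosure hS ha, eq_of_mem_unaryClosure hS hb]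

theorem exists_eq_comp_of_notMem_sdiff {u w : α → Bool} (hw : w ∈ unaryClosure S)
    (hwu : w ∉ unaryClosure (S \ {u})) : ∃ φ : Bool → Bool, w = φ ∘ u := by
  obtain ⟨c, rfl⟩ | ⟨v, hv, φ, rfl⟩ := hw
  · exact absurd (const_mem_unaryClosure c) hwu
  · by_cases hvu : v = u
    · exact ⟨φ, by rw [hvu]⟩
    · exact absurd (.inr ⟨v, ⟨hv, hvu⟩, φ, rfl⟩) hwu

theorem exists_eq_and_of_notMem_sdiff {u w : α → Bool} (hw : w ∈ andClosure S)
    (hwu : w ∉ andClosure (S \ {u})) :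
    ∃ φ p : Bool → Bool, ∃ b ∈ unaryClosure S, w = fun x => φ (p (u x) && b x) := by
  obtain ⟨a, ha, b, hb, φ, rfl⟩ := hw
  by_cases hau : a ∈ unaryClosure (S \ {u})
  · have hbu : b ∉ unaryClosure (S \ {u}) := fun hbu => hwu ⟨a, hau, b, hbu, φ, rfl⟩
    obtain ⟨p, rfl⟩ := exists_eq_comp_of_notMem_sdiff hb hbu
    exact ⟨φ, p, a, ha, by simp only [Function.comp_apply, Bool.and_comm]⟩
  · obtain ⟨p, rfl⟩ := exists_eq_comp_of_notMem_sdiff ha hau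
    exact ⟨φ, p, b, hb, rfl⟩

theorem comp_mem_andClosure_of_const {F : Bool → Bool → Bool} {c : Bool}
    (hF : F c false = F c true) {a b : α → Bool} (ha : a ∈ unaryClosure S)
    (hb : b ∈ unaryClosure S) : (fun x => F (a x) (b x)) ∈ andClosure S := by
  refine ⟨_, comp_mem_unaryClosure (fun y => y ^^ c) ha,
    _, comp_mem_unaryClosure (fun z => F c true ^^ F (!c) z) hb, fun t => F c true ^^ t, ?_⟩
  have hF' : ∀ y z, F y z = (F c true ^^ ((y ^^ c) && (F c true ^^ F (!c) z))) := by
    intro y z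
    obtain rfl | rfl := Bool.eq_or_eq_not y c
    · cases z <;> simp [hF]
    · simp
  exact funext fun x => hF' (a x) (b x)

theorem IsU2.exists_const {f : Bool → Bool → Bool} (hf : IsU2 f) :
    ∃ c, f c false = f c true ∨ f false c = f true c := by
  by_contra! h
  have hright (c : Bool) : f c true = !f c false := Bool.eq_not_iff.2 (h c).1.symm
  have hleft : f true false = !f false false := Bool.eq_not_iff.2 (h false).2.symm
  cases hff : f false false
  · refine hf.1 (funext₂ fun a b => ?_)
    cases a <;> cases b <;> simp [hright, hleft, hff]
  · refine hf.2 (funext₂ fun a b => ?_)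
    cases a <;> cases b <;> simp [hright, hleft, hff]

theorem IsU2.comp_mem_andClosure {f : Bool → Bool → Bool} (hf : IsU2 f) {a b : α → Bool}
    (ha : a ∈ unaryClosure S) (hb : b ∈ unaryClosure S) :
    (fun x => f (a x) (b x)) ∈ andClosure S := by
  obtain ⟨c, hc | hc⟩ := hf.exists_const
  · exact comp_mem_andClosure_of_const hc ha hb
  · exact comp_mem_andClosure_of_const (F := fun y z => f z y) hc hb ha

/-- `w` is a conjunction of `u` and `v`, up to unary functions, in which either input alone can
force the output: `p` takes the value `false` at `a` and `q` at `b`. -/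
def IsAndOf (u v w : α → Bool) : Prop :=
  ∃ φ p q : Bool → Bool, (∃ a, p a = false) ∧ (∃ b, q b = false) ∧
    w = fun x => φ (p (u x) && q (v x))

theorem exists_isAndOf {w : α → Bool} (hw : w ∈ andClosure S) (hw' : w ∉ unaryClosure S) :
    ∃ u ∈ S, ∃ v ∈ S, u ≠ v ∧ IsAndOf u v w := by
  obtain ⟨_, ⟨c, rfl⟩ | ⟨u, hu, p, rfl⟩, b, hb, φ, rfl⟩ := hw
  · exact absurd (comp_mem_unaryClosure (fun t => φ (c && t)) hb) hw'
  obtain ⟨c, rfl⟩ | ⟨v, hv, q, rfl⟩ := hb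
  · exact absurd (.inr ⟨u, hu, fun t => φ (p t && c), rfl⟩) hw'
  refine ⟨u, hu, v, hv, ?_, φ, p, q, ?_, ?_, rfl⟩
  · rintro rfl
    exact hw' (.inr ⟨u, hu, fun t => φ (p t && q t), rfl⟩)
  · by_contra! hp
    refine hw' (.inr ⟨v, hv, φ ∘ q, funext fun x => ?_⟩)
    simp [Bool.eq_true_of_not_eq_false (hp _)]
  · by_contra! hq
    refine hw' (.inr ⟨u, hu, φ ∘ p, funext fun x => ?_⟩)
    simp [Bool.eq_true_of_not_eq_false (hq _)]

theorem IsAndOf.exists_forall_eq {u v w : α → Bool} (h : IsAndOf u v w) :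
    ∃ a c, ∀ x, u x = a → w x = c := by
  obtain ⟨φ, p, q, ⟨a, ha⟩, -, rfl⟩ := h
  exact ⟨a, φ false, fun x hx => by simp [hx, ha]⟩

theorem IsAndOf.symm {u v w : α → Bool} (h : IsAndOf u v w) : IsAndOf v u w := by
  obtain ⟨φ, p, q, hp, hq, rfl⟩ := h
  exact ⟨φ, q, p, hq, hp, by simp only [Bool.and_comm]⟩

theorem IsAndOf.and_mem_andClosure {u v w : α → Bool} (h : IsAndOf u v w) (hu : u ∈ S)
    (hv : v ∈ S) (φ p q : Bool → Bool) : (fun x => φ (p (u x) && q (w x))) ∈ andClosure S := by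
  obtain ⟨ψ, p', q', -, -, rfl⟩ := h
  -- Either `u` can force the outer gate, or the outer gate ignores its direct wire from `u`.
  by_cases hp : ∃ c, p c = false
  · obtain ⟨c, hc⟩ := hp
    refine comp_mem_andClosure_of_const (F := fun y z => φ (p y && q (ψ (p' y && q' z)))) (c := c)
      ?_ (subset_unaryClosure hu) (subset_unaryClosure hv)
    simp [hc]
  · push Not at hp
    refine ⟨p' ∘ u, .inr ⟨u, hu, p', rfl⟩, q' ∘ v, .inr ⟨v, hv, q', rfl⟩, φ ∘ q ∘ ψ, ?_⟩
    simp [Bool.eq_true_of_not_eq_false (hp _)]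

theorem IsAndOf.mem_andClosure_sdiff {u v w y : α → Bool} (h : IsAndOf u v w)
    (hu : u ∈ S \ {w}) (hv : v ∈ S \ {w}) (hy : y ∈ andClosure S)
    (hyu : y ∉ andClosure (S \ {u})) : y ∈ andClosure (S \ {w}) := by
  obtain ⟨φ, p, b, hb, rfl⟩ := exists_eq_and_of_notMem_sdiff hy hyu
  by_cases hbw : b ∈ unaryClosure (S \ {w})
  · exact ⟨p ∘ u, .inr ⟨u, hu, p, rfl⟩, b, hbw, φ, rfl⟩
  · obtain ⟨q, rfl⟩ := exists_eq_comp_of_notMem_sdiff hb hbw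
    exact h.and_mem_andClosure hu hv φ p q

end Closure

/-- A `U₂`-circuit over the input functions `S`, seen semantically: a finite set of gates, indexed
by `κ` in topological order, together with the function computed at each of them. Values outside
`gates` are irrelevant, so gates are eliminated by shrinking `gates` alone. -/
structure AndProgram {α : Type*} (κ : Type*) [Preorder κ] (S : Set (α → Bool)) where
  gates : Finset κ
  val : κ → α → Bool
  val_mem : ∀ g ∈ gates, val g ∈ andClosure (S ∪ val '' {h | h ∈ gates ∧ h < g})

namespace AndProgram

variable {α β κ : Type*} [Preorder κ] {S : Set (α → Bool)} {S' : Set (β → Bool)}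
  (P : AndProgram κ S) {f : α → Bool} {g d : κ}

/-- The number of gates of a program. -/
def size : ℕ := P.gates.card

/-- The functions available as sources at the gate `g`: the inputs and the earlier gates. -/
def avail (g : κ) : Set (α → Bool) := S ∪ P.val '' {h | h ∈ P.gates ∧ h < g}

/-- The output wire of the program can be chosen to carry `f`. -/
def Computes (f : α → Bool) : Prop := f ∈ unaryClosure (S ∪ P.val '' P.gates)

/-- The gate `g` needs the source `u`: its function cannot be obtained by a gate from the other
available sources. -/
def Reads (g : κ) (u : α → Bool) : Prop := P.val g ∉ andClosure (P.avail g \ {u})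

/-- The gate `g` is bypassed by a single wire. -/
def IsRedundant (g : κ) : Prop := P.val g ∈ unaryClosure (P.avail g)

variable {P}

theorem Computes.exists_gate (hf : P.Computes f) (hfS : f ∉ unaryClosure S) :
    ∃ g ∈ P.gates, ∃ φ : Bool → Bool, f = φ ∘ P.val g := by
  obtain ⟨c, rfl⟩ | ⟨_, hu | ⟨g, hg, rfl⟩, φ, rfl⟩ := hf
  · exact absurd (const_mem_unaryClosure c) hfS
  · exact absurd (comp_mem_unaryClosure φ (subset_unaryClosure hu)) hfS
  · exact ⟨g, hg, φ, rfl⟩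

section Prune

variable [WellFoundedLT κ] [DecidableEq κ] {D : Finset κ}

theorem avail_subset_unaryClosure_sdiff (hD : ∀ d ∈ D, P.IsRedundant d) (g : κ) :
    P.avail g ⊆ unaryClosure (S ∪ P.val '' {h | h ∈ P.gates \ D ∧ h < g}) := by
  induction g using WellFoundedLT.induction with
  | _ g ih =>
    rintro _ (hu | ⟨h, ⟨hh, hhg⟩, rfl⟩)
    · exact subset_unaryClosure (.inl hu)
    by_cases hhD : h ∈ D
    · refine unaryClosure_mono ?_ (unaryClosure_subset (ih h hhg) (hD h hhD))
      gcongr S ∪ P.val '' ?_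
      exact fun k hk => ⟨hk.1, hk.2.trans hhg⟩
    · exact subset_unaryClosure (.inr ⟨h, ⟨Finset.mem_sdiff.2 ⟨hh, hhD⟩, hhg⟩, rfl⟩)

/-- The program obtained by deleting a set of redundant gates. -/
def prune (P : AndProgram κ S) (D : Finset κ) (hD : ∀ d ∈ D, P.IsRedundant d) :
    AndProgram κ S where
  gates := P.gates \ D
  val := P.val
  val_mem g hg := andClosure_subset (avail_subset_unaryClosure_sdiff hD g)
    (P.val_mem g (Finset.mem_sdiff.1 hg).1)

theorem Computes.prune (hf : P.Computes f) (hD : ∀ d ∈ D, P.IsRedundant d) :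
    (P.prune D hD).Computes f := by
  refine unaryClosure_subset ?_ hf
  rintro _ (hu | ⟨h, hh, rfl⟩)
  · exact subset_unaryClosure (.inl hu)
  by_cases hhD : h ∈ D
  · refine unaryClosure_mono ?_
      (unaryClosure_subset (avail_subset_unaryClosure_sdiff hD h) (hD h hhD))
    exact Set.union_subset_union_right S (Set.image_mono fun _ hk => hk.1)
  · exact subset_unaryClosure (.inr ⟨h, Finset.mem_sdiff.2 ⟨hh, hhD⟩, rfl⟩)

end Prune

section Comap

/-- The program obtained by precomposing every gate with `ρ`, such as a restriction of the
inputs. -/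
def comap (P : AndProgram κ S) (ρ : β → α) (hρ : ∀ u ∈ S, u ∘ ρ ∈ unaryClosure S') :
    AndProgram κ S' where
  gates := P.gates
  val g := P.val g ∘ ρ
  val_mem g hg := precomp_mem_andClosure
    (precomp_union_image_mem_unaryClosure hρ P.val _) (P.val_mem g hg)

variable {ρ : β → α} (hρ : ∀ u ∈ S, u ∘ ρ ∈ unaryClosure S')

theorem Computes.comap (hf : P.Computes f) : (P.comap ρ hρ).Computes (f ∘ ρ) :=
  precomp_mem_unaryClosure (precomp_union_image_mem_unaryClosure hρ P.val _) hf

theorem Reads.isRedundant_comap {u : α → Bool} {c : Bool} (hr : P.Reads g u)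
    (hg : g ∈ P.gates) (hc : ∀ y, u (ρ y) = c) : (P.comap ρ hρ).IsRedundant g := by
  obtain ⟨φ, p, b, hb, hval⟩ := exists_eq_and_of_notMem_sdiff (P.val_mem g hg) hr
  have hval' : P.val g ∘ ρ = (fun t => φ (p c && t)) ∘ (b ∘ ρ) := by
    ext y
    simp [hval, hc]
  rw [IsRedundant, show (P.comap ρ hρ).val g = _ from hval']
  exact comp_mem_unaryClosure _
    (precomp_mem_unaryClosure (precomp_union_image_mem_unaryClosure hρ P.val _) hb)

end Comap

theorem val_eq_of_forall_not_reads [WellFoundedLT κ] {x y : α} {u : α → Bool} {G : κ}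
    (hS : ∀ v ∈ S, v ≠ u → v x = v y) (hG : P.val G x = P.val G y)
    (hr : ∀ g ∈ P.gates, g ≠ G → ¬ P.Reads g u) : ∀ g ∈ P.gates, P.val g x = P.val g y := by
  intro g
  induction g using WellFoundedLT.induction with
  | _ g ih =>
    intro hg
    obtain rfl | hgG := eq_or_ne g G
    · exact hG
    refine eq_of_mem_andClosure ?_ (not_not.1 (hr g hg hgG))
    rintro _ ⟨hv | ⟨h, ⟨hh, hhg⟩, rfl⟩, hvu⟩
    · exact hS _ hv hvu
    · exact ih h hhg hh

/-- `P` has the least number of gates among the programs with the same inputs computing `f`. -/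
abbrev IsMinimal (P : AndProgram κ S) (f : α → Bool) : Prop :=
  MinimalFor (fun Q : AndProgram κ S => Q.Computes f) size P

theorem exists_isMinimal (hf : P.Computes f) : ∃ Q : AndProgram κ S, Q.IsMinimal f :=
  exists_minimalFor_of_wellFoundedLT _ _ ⟨P, hf⟩

namespace IsMinimal

theorem not_isRedundant [WellFoundedLT κ] (hP : P.IsMinimal f) (hd : d ∈ P.gates) :
    ¬ P.IsRedundant d := by
  classical
  intro hred
  have hD : ∀ e ∈ ({d} : Finset κ), P.IsRedundant e := by simpa using hred
  refine hP.not_prop_of_lt (j := P.prune {d} hD) ?_ (hP.prop.prune hD)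
  exact Finset.card_lt_card (Finset.sdiff_ssubset (Finset.singleton_subset_iff.2 hd)
    (Finset.singleton_nonempty d))

theorem exists_reads (hP : P.IsMinimal f) (hd : d ∈ P.gates)
    (hfd : ∀ φ : Bool → Bool, f ≠ φ ∘ P.val d) : ∃ g ∈ P.gates, P.Reads g (P.val d) := by
  classical
  by_contra! h
  let Q : AndProgram κ S :=
    { gates := P.gates.erase d
      val := P.val
      val_mem := fun g hg => by
        refine andClosure_mono ?_ (not_not.1 (h g (Finset.mem_of_mem_erase hg)))
        rintro _ ⟨hu | ⟨k, ⟨hk, hkg⟩, rfl⟩, hne⟩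
        · exact .inl hu
        · exact .inr ⟨k, ⟨Finset.mem_erase.2 ⟨ne_of_apply_ne P.val hne, hk⟩, hkg⟩, rfl⟩ }
  refine hP.not_prop_of_lt (j := Q) (Finset.card_erase_lt_of_mem hd) ?_
  obtain ⟨c, rfl⟩ | ⟨_, hu | ⟨k, hk, rfl⟩, φ, rfl⟩ := hP.prop
  · exact const_mem_unaryClosure c
  · exact .inr ⟨_, .inl hu, φ, rfl⟩
  · refine .inr ⟨_, .inr ⟨k, Finset.mem_erase.2 ⟨?_, hk⟩, rfl⟩, φ, rfl⟩
    rintro rfl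
    exact hfd φ rfl

theorem exists_isAndOf [WellFoundedLT κ] (hP : P.IsMinimal f) (hf : f ∉ unaryClosure S) :
    ∃ G ∈ P.gates, ∃ u ∈ S, ∃ v ∈ S, u ≠ v ∧ IsAndOf u v (P.val G) := by
  obtain ⟨h, hh, -⟩ := hP.prop.exists_gate hf
  obtain ⟨G, hG⟩ := P.gates.exists_minimal ⟨h, hh⟩
  have havail : P.avail G = S := by
    have : {h | h ∈ P.gates ∧ h < G} = ∅ := by
      ext k
      simpa using fun hk => hG.not_lt hk
    rw [avail, this, Set.image_empty, Set.union_empty]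
  have hmem : P.val G ∈ andClosure (P.avail G) := P.val_mem G hG.prop
  have hred : P.val G ∉ unaryClosure (P.avail G) := hP.not_isRedundant hG.prop
  rw [havail] at hmem hred
  exact ⟨G, hG.prop, _root_.exists_isAndOf hmem hred⟩

theorem not_reads_of_isAndOf [WellFoundedLT κ] (hP : P.IsMinimal f) {G : κ} (hG : G ∈ P.gates)
    {u v : α → Bool} (hu : u ∈ S) (hv : v ∈ S) (h : IsAndOf u v (P.val G)) (hg : g ∈ P.gates)
    (hr : P.Reads g u) : ¬ P.Reads g (P.val G) := by
  have hne : ∀ w ∈ S, w ∈ P.avail g \ {P.val G} := by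
    refine fun w hw => ⟨.inl hw, ?_⟩
    rintro rfl
    exact hP.not_isRedundant hG (subset_unaryClosure (.inl hw))
  exact not_not.2 (h.mem_andClosure_sdiff (hne u hu) (hne v hv) (P.val_mem g hg) hr)

theorem ne_of_reads [WellFoundedLT κ] (hP : P.IsMinimal f) (hg : g ∈ P.gates)
    (hr : P.Reads g (P.val d)) : g ≠ d := by
  rintro rfl
  have hself : P.val g ∉ P.avail g := fun h => hP.not_isRedundant hg (subset_unaryClosure h)
  rw [Reads, Set.sdiff_singleton_eq_self hself] at hr
  exact hr (P.val_mem g hg)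

end IsMinimal

end AndProgram

section Cube

variable {ι : Type*} {T : Finset ι} {f : (ι → Bool) → Bool}

/-- The `i`-th input variable as a function on the Boolean cube. -/
def coord (i : ι) : (ι → Bool) → Bool := fun x => x i

variable [DecidableEq ι]

@[simp] theorem coord_update_self (i : ι) (x : ι → Bool) (c : Bool) :
    coord i (Function.update x i c) = c := by
  simp [coord]

@[simp] theorem coord_update_of_ne {i j : ι} (hji : j ≠ i) (x : ι → Bool) (c : Bool) :
    coord j (Function.update x i c) = coord j x := by
  simp [coord, hji]

/-- Flipping any one variable in `T` always flips the value of `f`; equivalently, `f` is the parity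
of the variables in `T` plus a function of the remaining variables. -/
def FlipsOn (T : Finset ι) (f : (ι → Bool) → Bool) : Prop :=
  ∀ i ∈ T, ∀ x, f (Function.update x i (!x i)) = !f x

theorem FlipsOn.comp_update (hf : FlipsOn T f) (i : ι) (c : Bool) :
    FlipsOn (T.erase i) (f ∘ fun x => Function.update x i c) := by
  intro j hj x
  obtain ⟨hji, hjT⟩ := Finset.mem_erase.1 hj
  have := hf j hjT (Function.update x i c)
  rwa [Function.update_of_ne hji, Function.update_comm hji.symm] at this

theorem FlipsOn.comp_piecewise (hf : FlipsOn T f) (y : ι → Bool) :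
    FlipsOn T (f ∘ fun x => T.piecewise x y) := by
  intro i hi x
  have := hf i hi (T.piecewise x y)
  rwa [Finset.update_piecewise_of_mem _ _ _ hi, Finset.piecewise_eq_of_mem _ _ _ hi] at this

theorem FlipsOn.ne_comp_of_eq (hf : FlipsOn T f) {i : ι} (hi : i ∈ T) {x : ι → Bool}
    {w : (ι → Bool) → Bool} (hw : w x = w (Function.update x i (!x i))) (φ : Bool → Bool) :
    f ≠ φ ∘ w := by
  rintro rfl
  have := hf i hi x
  rw [Function.comp_apply, ← hw] at this
  exact Bool.self_ne_not _ this

theorem FlipsOn.notMem_unaryClosure (hf : FlipsOn T f) (hT : 1 < T.card) :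
    f ∉ unaryClosure (coord '' T) := by
  rintro (⟨c, rfl⟩ | ⟨_, ⟨k, -, rfl⟩, φ, hφ⟩)
  · obtain ⟨i, hi⟩ := Finset.card_pos.1 (zero_lt_one.trans hT)
    exact Bool.self_ne_not c (hf i hi fun _ => false)
  · obtain ⟨i, hi, hik⟩ := Finset.exists_mem_ne hT k
    refine hf.ne_comp_of_eq hi (x := fun _ => false) ?_ φ hφ
    rw [coord_update_of_ne hik.symm]

theorem comp_update_mem_unaryClosure (i : ι) (c : Bool) :
    ∀ u ∈ coord '' (T : Set ι),
      (u ∘ fun x => Function.update x i c) ∈ unaryClosure (coord '' (T.erase i : Set ι)) := by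
  rintro _ ⟨j, hj, rfl⟩
  obtain rfl | hji := eq_or_ne j i
  · exact .inl ⟨c, by ext; simp⟩
  · refine .inr ⟨coord j, ⟨j, by simpa [hji] using hj, rfl⟩, id, ?_⟩
    ext x
    simp [hji]

theorem comp_piecewise_mem_unaryClosure (y : ι → Bool) :
    ∀ u ∈ Set.range (coord : ι → _),
      (u ∘ fun x => T.piecewise x y) ∈ unaryClosure (coord '' (T : Set ι)) := by
  rintro _ ⟨i, rfl⟩
  by_cases hi : i ∈ T
  · exact .inr ⟨coord i, ⟨i, hi, rfl⟩, id, by ext; simp [coord, hi]⟩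
  · exact .inl ⟨y i, by ext; simp [coord, hi]⟩

end Cube

namespace AndProgram

variable {ι κ : Type*} [DecidableEq ι] [Preorder κ] {T : Finset ι}
  {P : AndProgram κ (coord '' (T : Set ι))} {f : (ι → Bool) → Bool} {G : κ} {i j : ι}

theorem exists_reads_coord [WellFoundedLT κ] (hP : P.Computes f) (hf : FlipsOn T f)
    (hT : 1 < T.card) (hi : i ∈ T) (hij : i ≠ j) (hG : IsAndOf (coord i) (coord j) (P.val G)) :
    ∃ A ∈ P.gates, A ≠ G ∧ P.Reads A (coord i) := by
  by_contra! hr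
  obtain ⟨b, c, hb⟩ := hG.symm.exists_forall_eq
  obtain ⟨g, hg, φ, hφ⟩ := hP.exists_gate (hf.notMem_unaryClosure hT)
  refine hf.ne_comp_of_eq hi (x := fun _ => b) ?_ φ hφ
  refine val_eq_of_forall_not_reads ?_ ?_ hr g hg
  · rintro _ ⟨k, -, rfl⟩ hk
    rw [coord_update_of_ne (ne_of_apply_ne coord hk)]
  · rw [hb (fun _ => b) rfl, hb _ (coord_update_of_ne hij.symm _ _)]

theorem IsMinimal.exists_reads_first (hP : P.IsMinimal f) (hf : FlipsOn T f) (hj : j ∈ T)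
    (hij : i ≠ j) (hGP : G ∈ P.gates) (hG : IsAndOf (coord i) (coord j) (P.val G)) :
    ∃ B ∈ P.gates, P.Reads B (P.val G) := by
  obtain ⟨a, c, ha⟩ := hG.exists_forall_eq
  refine hP.exists_reads hGP (hf.ne_comp_of_eq hj (x := fun _ => a) ?_)
  rw [ha (fun _ => a) rfl, ha _ (coord_update_of_ne hij _ _)]

theorem IsMinimal.exists_three_gates [WellFoundedLT κ] (hP : P.IsMinimal f) (hf : FlipsOn T f)
    (hT : 1 < T.card) : ∃ i ∈ T, ∃ c, ∃ D ⊆ P.gates, D.card = 3 ∧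
      ∀ d ∈ D, (P.comap _ (comp_update_mem_unaryClosure i c)).IsRedundant d := by
  classical
  obtain ⟨G, hGP, _, ⟨i, hi, rfl⟩, _, ⟨j, hj, rfl⟩, hne, hG⟩ :=
    hP.exists_isAndOf (hf.notMem_unaryClosure hT)
  have hij : i ≠ j := ne_of_apply_ne coord hne
  obtain ⟨A, hAP, hAG, hA⟩ := exists_reads_coord hP.prop hf hT hi hij hG
  obtain ⟨B, hBP, hB⟩ := hP.exists_reads_first hf hj hij hGP hG
  have hBG : B ≠ G := hP.ne_of_reads hBP hB
  have hAB : A ≠ B := by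
    rintro rfl
    exact hP.not_reads_of_isAndOf hGP ⟨i, hi, rfl⟩ ⟨j, hj, rfl⟩ hG hAP hA hB
  obtain ⟨a, c, ha⟩ := hG.exists_forall_eq
  have hG_const : ∀ x, P.val G (Function.update x i a) = c :=
    fun x => ha _ (coord_update_self i x a)
  refine ⟨i, hi, a, {G, A, B}, ?_, Finset.card_eq_three.2 ⟨G, A, B, hAG.symm, hBG.symm, hAB, rfl⟩,
    ?_⟩
  · simp [Finset.insert_subset_iff, hGP, hAP, hBP]
  · simp only [Finset.mem_insert, Finset.mem_singleton]
    rintro d (rfl | rfl | rfl)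
    · exact .inl ⟨c, funext hG_const⟩
    · exact hA.isRedundant_comap _ hAP fun x => coord_update_self i x a
    · exact hB.isRedundant_comap _ hBP hG_const

theorem three_mul_card_sub_one_le_size [WellFoundedLT κ] (hP : P.Computes f)
    (hf : FlipsOn T f) : 3 * (T.card - 1) ≤ P.size := by
  classical
  induction T using Finset.strongInduction generalizing f with
  | _ T ih =>
    obtain hT | hT := le_or_gt T.card 1
    · simp [Nat.sub_eq_zero_of_le hT]
    obtain ⟨Q, hQ⟩ := exists_isMinimal hP
    obtain ⟨i, hi, c, D, hDQ, hD3, hD⟩ := hQ.exists_three_gates hf hT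
    have ih_erase := ih _ (Finset.erase_ssubset hi) ((hQ.prop.comap _).prune hD)
      (hf.comp_update i c)
    have hsize : (prune _ D hD).size + 3 = Q.size := hD3 ▸ Finset.card_sdiff_add_card_eq_card hDQ
    have hT_erase := Finset.card_erase_add_one hi
    have hQP : Q.size ≤ P.size := hQ.le hP
    omega

end AndProgram

namespace Circuit

variable {ι : Type} (C : Circuit ι)

/-- The function carried by a wire out of an input node or out of one of the first `m` gates. -/
def wire {m : ℕ} (hm : m ≤ C.size) : (ι ⊕ Bool) ⊕ Fin m → (ι → Bool) → Bool
  | .inl (.inl i) => coord i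
  | .inl (.inr b) => fun _ => b
  | .inr h => fun x => C.nodeVal x (h.castLE hm)

theorem nodeVal_eq_gate_wire (g : Fin C.size) (x : ι → Bool) :
    C.nodeVal x g = C.gate g (C.wire g.isLt.le (C.in1 g) x) (C.wire g.isLt.le (C.in2 g) x) := by
  rw [nodeVal]
  rcases C.in1 g with (_ | _) | _ <;> rcases C.in2 g with (_ | _) | _ <;> rfl

theorem eval_eq_wire : C.eval = C.wire le_rfl C.out := by
  ext x
  rw [eval]
  rcases C.out with (_ | _) | _ <;> rfl

theorem wire_mem_unaryClosure {m : ℕ} (hm : m ≤ C.size) (w : (ι ⊕ Bool) ⊕ Fin m) :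
    C.wire hm w ∈ unaryClosure (Set.range coord ∪
      (fun g x => C.nodeVal x g) '' {h : Fin C.size | h.val < m}) := by
  rcases w with (i | b) | h
  · exact subset_unaryClosure (.inl ⟨i, rfl⟩)
  · exact const_mem_unaryClosure b
  · exact subset_unaryClosure (.inr ⟨h.castLE hm, h.isLt, rfl⟩)

variable {C}

/-- The semantic form of a `U₂`-circuit. -/
def IsU2Circuit.toAndProgram (hC : C.IsU2Circuit) :
    AndProgram (Fin C.size) (Set.range (coord : ι → _)) where
  gates := Finset.univ
  val g x := C.nodeVal x g
  val_mem g _ := by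
    simp only [nodeVal_eq_gate_wire C g, Finset.mem_univ, true_and]
    exact (hC g).comp_mem_andClosure (C.wire_mem_unaryClosure g.isLt.le _)
      (C.wire_mem_unaryClosure g.isLt.le _)

theorem IsU2Circuit.toAndProgram_computes (hC : C.IsU2Circuit) :
    hC.toAndProgram.Computes C.eval := by
  rw [eval_eq_wire]
  refine unaryClosure_mono ?_ (C.wire_mem_unaryClosure le_rfl C.out)
  exact Set.union_subset_union_right _ (Set.image_mono fun h _ => Finset.mem_univ h)

end Circuit

theorem parity_flipsOn_univ (n : ℕ) : FlipsOn Finset.univ (parity n) := by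
  intro i _ x
  have hrest : ∑ j ∈ Finset.univ.erase i, (Function.update x i (!x i) j).toNat =
      ∑ j ∈ Finset.univ.erase i, (x j).toNat :=
    Finset.sum_congr rfl fun j hj => by rw [Function.update_of_ne (Finset.ne_of_mem_erase hj)]
  rw [parity, parity, ← Finset.add_sum_erase _ _ (Finset.mem_univ i), hrest,
    ← Finset.add_sum_erase _ (fun j => (x j).toNat) (Finset.mem_univ i), Function.update_self,
    ← decide_not, decide_eq_decide]
  cases x i <;> simp only [Bool.not_true, Bool.not_false, Bool.toNat_true, Bool.toNat_false] <;>
    omega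

theorem parity_detU2_lower_bound_general {ι : Type} [DecidableEq ι] (T : Finset ι)
    (C : Circuit ι) (hU2 : C.IsU2Circuit) (hC : FlipsOn T C.eval) :
    3 * (T.card - 1) ≤ C.size := by
  have hsize : hU2.toAndProgram.size = C.size := Finset.card_fin _
  rw [← hsize]
  exact AndProgram.three_mul_card_sub_one_le_size
    (hU2.toAndProgram_computes.comap (comp_piecewise_mem_unaryClosure fun _ => false))
    (hC.comp_piecewise _)

/-- For every `n ≥ 2`, every deterministic `U₂`-circuit computing
`Parity_n` has at least `3(n-1)` gates. -/
theorem parity_detU2_lower_bound (n : ℕ) (hn : 2 ≤ n) (C : Circuit (Fin n))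
    (hU2 : C.IsU2Circuit) (hC : C.Computes (parity n)) :
    3 * (n - 1) ≤ C.size := by
  have hflips : FlipsOn Finset.univ C.eval := funext hC ▸ parity_flipsOn_univ n
  simpa using parity_detU2_lower_bound_general Finset.univ C hU2 hflips
end
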